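/- arXiv:1712.03565 — 2 statements merged into one kernel-verified Lean document; each statement's English description precedes it below -/
import Mathlib

section
/- Consider a single leaf connected to the sink through levels 0,…,h with y ≥ 0, δ_i ∈ (0,1] for all i, ε_R, ε_T, ε_C ≥ 0, w_ca ≥ 0, T ≥ 0 and R ≥ 1. For c ∈ {0,…,h}, let e^{(c)} denote the caching decision that caches at level c (b_c = 1 and b_i = 0 for i ≠ c), so that E^R(e^{(c)}) = y·(R−1)·Σ_{ℓ=0}^{c−1} f(δ_ℓ)·Π_{m=ℓ+1}^{h} δ_m + y·(Π_{m=c}^{h} δ_m)·(w_ca·T + (R−1)·ε_T). Then c ↦ E^R(e^{(c)}) is monotonically nondecreasing in c; in particular, for every 1 ≤ c ≤ h, E^R(e^{(c−1)}) ≤ E^R(e^{(c)}), i.e., for fixed compression rates, moving the cached copy one level closer to the sink never increases the retrieval energy. -/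
open Finset

/-- Per-bit cost function `f(δ) = ε_R + ε_T·δ + ε_C·(1/δ − 1)`. -/
noncomputable def fcost (εR εT εC δ : ℝ) : ℝ := εR + εT * δ + εC * (1 / δ - 1)

/-- One-time cost `E^C = Σ_{i=0}^{h} y·f(δ_i)·Π_{m=i+1}^{h} δ_m`. -/
noncomputable def ECost (εR εT εC y : ℝ) (h : ℕ) (δ : ℕ → ℝ) : ℝ :=
  ∑ i ∈ Finset.range (h + 1),
    y * fcost εR εT εC (δ i) * ∏ m ∈ Finset.Icc (i + 1) h, δ m

/-- Retrieval cost
`E^R = Σ_{i=0}^{h} y·[(R−1)·f(δ_i)·(Π_{m=i+1}^{h} δ_m)·(1 − Σ_{j=0}^{i} b_j)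
      + (Π_{m=i}^{h} δ_m)·b_i·(w_ca·T + (R−1)·ε_T)]`. -/
noncomputable def ERet (εR εT εC wca T y R : ℝ) (h : ℕ) (δ b : ℕ → ℝ) : ℝ :=
  ∑ i ∈ Finset.range (h + 1),
    y * ((R - 1) * fcost εR εT εC (δ i) * (∏ m ∈ Finset.Icc (i + 1) h, δ m) *
        (1 - ∑ j ∈ Finset.range (i + 1), b j)
      + (∏ m ∈ Finset.Icc i h, δ m) * b i * (wca * T + (R - 1) * εT))

/-- The caching decision `e^{(c)}` of the paper: the only cached copy is held at level `c`. -/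
def cacheAt (c : ℕ) : ℕ → ℝ := fun i => if i = c then 1 else 0

lemma sum_range_ite_lt {M : Type*} [AddCommMonoid M] {c n : ℕ} (hcn : c ≤ n) (a : ℕ → M) :
    ∑ i ∈ range n, (if i < c then a i else 0) = ∑ i ∈ range c, a i := by
  rw [← sum_filter]
  congr 1
  ext i
  simp only [mem_filter, mem_range]
  omega

lemma one_sub_sum_range_succ_cacheAt (c i : ℕ) :
    1 - ∑ j ∈ range (i + 1), cacheAt c j = if i < c then 1 else 0 := by
  rcases lt_or_ge i c with hic | hci
  · simp [cacheAt, hic, hic.not_ge]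
  · simp [cacheAt, hci, hci.not_gt]

lemma fcost_nonneg {εR εT εC δ : ℝ} (hεR : 0 ≤ εR) (hεT : 0 ≤ εT) (hεC : 0 ≤ εC)
    (hδ0 : 0 < δ) (hδ1 : δ ≤ 1) : 0 ≤ fcost εR εT εC δ :=
  add_nonneg (add_nonneg hεR (mul_nonneg hεT hδ0.le))
    (mul_nonneg hεC (sub_nonneg.2 (one_le_one_div hδ0 hδ1)))

section RetrievalCost

variable {εR εT εC wca T y R : ℝ} {h : ℕ} {δ : ℕ → ℝ}

lemma ERet_cacheAt {c : ℕ} (hc : c ≤ h) :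
    ERet εR εT εC wca T y R h δ (cacheAt c)
      = y * (R - 1) * ∑ ℓ ∈ range c, fcost εR εT εC (δ ℓ) * ∏ m ∈ Icc (ℓ + 1) h, δ m
        + y * (∏ m ∈ Icc c h, δ m) * (wca * T + (R - 1) * εT) := by
  have forwarding :
      ∑ i ∈ range (h + 1), y * ((R - 1) * fcost εR εT εC (δ i) *
          (∏ m ∈ Icc (i + 1) h, δ m) * (1 - ∑ j ∈ range (i + 1), cacheAt c j))
        = y * (R - 1) * ∑ ℓ ∈ range c, fcost εR εT εC (δ ℓ) * ∏ m ∈ Icc (ℓ + 1) h, δ m := by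
    simp only [one_sub_sum_range_succ_cacheAt, mul_ite, mul_one, mul_zero]
    rw [sum_range_ite_lt (Nat.le_succ_of_le hc), mul_sum]
    exact sum_congr rfl fun i _ => by ring
  have caching :
      ∑ i ∈ range (h + 1), y * ((∏ m ∈ Icc i h, δ m) * cacheAt c i * (wca * T + (R - 1) * εT))
        = y * (∏ m ∈ Icc c h, δ m) * (wca * T + (R - 1) * εT) := by
    simp only [cacheAt, mul_ite, ite_mul, mul_one, mul_zero, zero_mul, sum_ite_eq', mem_range,
      Nat.lt_succ_of_le hc, if_true, mul_assoc]
  simp only [ERet, mul_add y, sum_add_distrib, forwarding, caching]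

/- Holding the copy one level farther from the sink makes every repeated request pay for level `c`,
and the copy, not yet reduced by the factor `δ c`, is no smaller to store and to transmit. -/
lemma ERet_cacheAt_succ {c : ℕ} (hc : c < h) :
    ERet εR εT εC wca T y R h δ (cacheAt (c + 1))
      = ERet εR εT εC wca T y R h δ (cacheAt c)
        + y * (∏ m ∈ Icc (c + 1) h, δ m) *
          ((R - 1) * fcost εR εT εC (δ c) + (1 - δ c) * (wca * T + (R - 1) * εT)) := by
  rw [ERet_cacheAt hc.le, ERet_cacheAt hc, sum_range_succ, ← mul_prod_Ioc_eq_prod_Icc hc.le,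
    ← Icc_add_one_left_eq_Ioc]
  ring

lemma monotoneOn_ERet_cacheAt (hεR : 0 ≤ εR) (hεT : 0 ≤ εT) (hεC : 0 ≤ εC) (hwca : 0 ≤ wca)
    (hT : 0 ≤ T) (hy : 0 ≤ y) (hδ : ∀ i ≤ h, 0 < δ i ∧ δ i ≤ 1) (hR : 1 ≤ R) :
    MonotoneOn (fun c => ERet εR εT εC wca T y R h δ (cacheAt c)) (Set.Iic h) := by
  refine monotoneOn_of_le_add_one Set.ordConnected_Iic fun c _ _ (hc : c < h) => ?_
  have hprod : 0 ≤ ∏ m ∈ Icc (c + 1) h, δ m :=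
    prod_nonneg fun m hm => (hδ m (mem_Icc.1 hm).2).1.le
  obtain ⟨hδ0, hδ1⟩ := hδ c hc.le
  have hf : 0 ≤ fcost εR εT εC (δ c) := fcost_nonneg hεR hεT hεC hδ0 hδ1
  have hR1 : 0 ≤ R - 1 := sub_nonneg.2 hR
  have hcopy : 0 ≤ wca * T + (R - 1) * εT :=
    add_nonneg (mul_nonneg hwca hT) (mul_nonneg hR1 hεT)
  simp only [ERet_cacheAt_succ hc]
  exact le_add_of_nonneg_right <| mul_nonneg (mul_nonneg hy hprod) <|
    add_nonneg (mul_nonneg hR1 hf) (mul_nonneg (sub_nonneg.2 hδ1) hcopy)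

end RetrievalCost

/-- Caching one level closer to the sink never increases the retrieval energy. -/
theorem cache_closer_to_sink_decreases_retrieval_energy
    (εR εT εC wca T y R : ℝ) (h : ℕ) (δ : ℕ → ℝ)
    (hεR : 0 ≤ εR) (hεT : 0 ≤ εT) (hεC : 0 ≤ εC) (hwca : 0 ≤ wca) (hT : 0 ≤ T)
    (hy : 0 ≤ y) (hδ : ∀ i ≤ h, 0 < δ i ∧ δ i ≤ 1) (hR : 1 ≤ R) :
    (∀ c ≤ h, ERet εR εT εC wca T y R h δ (fun i => if i = c then 1 else 0)
        = y * (R - 1) * ∑ ℓ ∈ Finset.range c,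
              fcost εR εT εC (δ ℓ) * ∏ m ∈ Finset.Icc (ℓ + 1) h, δ m
          + y * (∏ m ∈ Finset.Icc c h, δ m) * (wca * T + (R - 1) * εT)) ∧
    (∀ c, 1 ≤ c → c ≤ h →
      ERet εR εT εC wca T y R h δ (fun i => if i = c - 1 then 1 else 0)
        ≤ ERet εR εT εC wca T y R h δ (fun i => if i = c then 1 else 0)) :=
  ⟨fun _ hc => ERet_cacheAt hc, fun c _ hc =>
    monotoneOn_ERet_cacheAt hεR hεT hεC hwca hT hy hδ hR
      ((Nat.sub_le c 1).trans hc) hc (Nat.sub_le c 1)⟩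
end

section
/- Reduction correctness (core of the NP-hardness Theorem): let K be a finite set of leaves, each at level 1 below a common sink, with y_k ≥ 0, δ_{k,0} = δ_{k,1} = 1, R_k ≥ 1, caching decision b_k ∈ {0,1} at the sink, zero caching cost w_ca = 0, and sink cache capacity W ≥ 0. Set c_k = y_k·(R_k−1)·(2·f(1) − ε_T) with f(1) = ε_R + ε_T. Then E^total(b) = C − Σ_{k∈K} b_k·c_k for a constant C independent of b, and consequently a vector b* ∈ {0,1}^K with Σ_{k∈K} y_k·b*_k ≤ W minimizes E^total over all b ∈ {0,1}^K satisfying Σ_{k∈K} y_k·b_k ≤ W if and only if b* maximizes the knapsack objective Σ_{k∈K} c_k·b_k over the same feasible set. -/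
open Finset

/-- The caching decision vector of a path that caches a share `x` of its data at the sink
(level `0`) and nothing elsewhere; `x ∈ {0, 1}` in the energy model. -/
def sinkDecision (x : ℝ) : ℕ → ℝ := fun i => if i = 0 then x else 0

section SinglePath

variable (εR εT εC wca T y R x : ℝ) (h : ℕ) (δ : ℕ → ℝ)

/-- Energy saved on a single path by caching at the sink: the `R - 1` retrievals no longer cost
`E^C` each, but the data that reaches the cache has to be stored, and sent `R - 1` times. -/
noncomputable def sinkSaving : ℝ :=
  (R - 1) * ECost εR εT εC y h δ - y * (∏ m ∈ Icc 0 h, δ m) * (wca * T + (R - 1) * εT)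

theorem sum_range_succ_sinkDecision (i : ℕ) : ∑ j ∈ range (i + 1), sinkDecision x j = x := by
  simp [sinkDecision]

-- Since `b_0` is the only nonzero decision, the share still forwarded is `1 - x` at every level,
-- so it factors out of the forwarding cost and leaves `R - 1` copies of `E^C`.
theorem ERet_sinkDecision :
    ERet εR εT εC wca T y R h δ (sinkDecision x) =
      (R - 1) * ECost εR εT εC y h δ * (1 - x) +
        y * (∏ m ∈ Icc 0 h, δ m) * x * (wca * T + (R - 1) * εT) := by
  have forwarding : ∑ i ∈ range (h + 1), y * ((R - 1) * fcost εR εT εC (δ i) *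
      (∏ m ∈ Icc (i + 1) h, δ m) * (1 - x)) = (R - 1) * ECost εR εT εC y h δ * (1 - x) := by
    rw [ECost, mul_sum, sum_mul]
    exact sum_congr rfl fun i _ => by ring
  have caching : ∑ i ∈ range (h + 1), y * ((∏ m ∈ Icc i h, δ m) * sinkDecision x i *
      (wca * T + (R - 1) * εT)) =
        y * (∏ m ∈ Icc 0 h, δ m) * x * (wca * T + (R - 1) * εT) := by
    rw [sum_eq_single_of_mem 0 (by simp) fun i _ hi => by simp [sinkDecision, hi]]
    simp only [sinkDecision, if_true]
    ring
  simp only [ERet, sum_range_succ_sinkDecision, mul_add y, sum_add_distrib]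
  rw [forwarding, caching]

theorem ECost_add_ERet_sinkDecision :
    ECost εR εT εC y h δ + ERet εR εT εC wca T y R h δ (sinkDecision x) =
      R * ECost εR εT εC y h δ - x * sinkSaving εR εT εC wca T y R h δ := by
  rw [ERet_sinkDecision, sinkSaving]
  ring

theorem fcost_one : fcost εR εT εC 1 = εR + εT := by
  simp [fcost]

theorem ECost_one : ECost εR εT εC y h (fun _ => 1) = (h + 1) * (y * (εR + εT)) := by
  simp [ECost, fcost_one]

theorem sinkSaving_one :
    sinkSaving εR εT εC wca T y R h (fun _ => 1) =
      y * (R - 1) * ((h + 1) * (εR + εT) - εT) - y * (wca * T) := by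
  simp only [sinkSaving, ECost_one, prod_const_one]
  ring

end SinglePath

theorem isMinOn_const_sub_iff {α G : Type*} [AddGroup G] [Preorder G]
    [AddLeftMono G] [AddRightMono G] (C : G) (g : α → G) (s : Set α) (a : α) :
    IsMinOn (fun x => C - g x) s a ↔ IsMaxOn g s a := by
  simp only [isMinOn_iff, isMaxOn_iff, sub_le_sub_iff_left]

theorem knapsack_reduction_correctness_general {ι : Type*} (K : Finset ι)
    (εR εT εC wca T : ℝ) (y R : ι → ℝ) (h : ι → ℕ) (δ : ι → ℕ → ℝ) :
    let c : ι → ℝ := fun k => sinkSaving εR εT εC wca T (y k) (R k) (h k) (δ k)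
    let Etotal : (ι → ℝ) → ℝ := fun b => ∑ k ∈ K,
      (ECost εR εT εC (y k) (h k) (δ k)
        + ERet εR εT εC wca T (y k) (R k) (h k) (δ k) (sinkDecision (b k)))
    (∀ b : ι → ℝ, Etotal b =
      ∑ k ∈ K, R k * ECost εR εT εC (y k) (h k) (δ k) - ∑ k ∈ K, b k * c k) ∧
    (∀ (S : Set (ι → ℝ)) (bstar : ι → ℝ),
      IsMinOn Etotal S bstar ↔ IsMaxOn (fun b => ∑ k ∈ K, b k * c k) S bstar) := by
  intro c Etotal
  have energy_eq (b : ι → ℝ) : Etotal b =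
      ∑ k ∈ K, R k * ECost εR εT εC (y k) (h k) (δ k) - ∑ k ∈ K, b k * c k := by
    simp only [Etotal, c, ECost_add_ERet_sinkDecision, sum_sub_distrib]
  refine ⟨energy_eq, fun S bstar => ?_⟩
  rw [funext energy_eq, isMinOn_const_sub_iff]

/-- Reduction correctness (core of the NP-hardness theorem): the total energy is an
affine function `C − Σ_k b_k·c_k` of the caching decisions, hence minimizing energy
over capacity-feasible 0/1 decisions is equivalent to maximizing the knapsack
objective `Σ_k c_k·b_k`. -/
theorem knapsack_reduction_correctness {ι : Type*} (K : Finset ι)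
    (εR εT εC T W : ℝ) (hεR : 0 ≤ εR) (hεT : 0 ≤ εT) (hεC : 0 ≤ εC)
    (hT : 0 ≤ T) (hW : 0 ≤ W)
    (y R : ι → ℝ) (hy : ∀ k ∈ K, 0 ≤ y k) (hR : ∀ k ∈ K, 1 ≤ R k) :
    let c : ι → ℝ := fun k => y k * (R k - 1) * (2 * (εR + εT) - εT)
    let Etotal : (ι → ℝ) → ℝ := fun b => ∑ k ∈ K,
      (ECost εR εT εC (y k) 1 (fun _ => 1)
        + ERet εR εT εC 0 T (y k) (R k) 1 (fun _ => 1) (fun i => if i = 0 then b k else 0))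
    let feasible : (ι → ℝ) → Prop := fun b =>
      (∀ k ∈ K, b k = 0 ∨ b k = 1) ∧ ∑ k ∈ K, y k * b k ≤ W
    (∃ C : ℝ, ∀ b : ι → ℝ, (∀ k ∈ K, b k = 0 ∨ b k = 1) →
        Etotal b = C - ∑ k ∈ K, b k * c k) ∧
    (∀ bstar : ι → ℝ, feasible bstar →
      ((∀ b : ι → ℝ, feasible b → Etotal bstar ≤ Etotal b) ↔
        (∀ b : ι → ℝ, feasible b → ∑ k ∈ K, c k * b k ≤ ∑ k ∈ K, c k * bstar k))) := by
  intro c Etotal feasible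
  have general := knapsack_reduction_correctness_general K εR εT εC 0 T y R
    (fun _ => 1) (fun _ _ => 1)
  simp only [sinkSaving_one, Nat.cast_one, one_add_one_eq_two, zero_mul, mul_zero, sub_zero]
    at general
  simp only [mul_comm (c _)]
  exact ⟨⟨_, fun b _ => general.1 b⟩, fun bstar _ => general.2 {b | feasible b} bstar⟩
end
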